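/- Let f: F_2^3 → F_2 be the elementary CA rule 210, i.e. f(x_1, x_2, x_3) = x_1 ⊕ x_3 ⊕ x_2 x_3. Then for every n with 3 ≤ n ≤ 20, the function f*: F_2^n → F_2 given by the CA-based construction is both balanced and semi-bent. -/

import Mathlib

/-- The CA-based construction: given a local rule `f` of `m` variables and `n ≥ m`,
the `n`-variable function `f*` is the XOR of all output cells of the no-boundary CA. -/
def caStar (m n : ℕ) (h : m ≤ n) (f : (Fin m → ZMod 2) → ZMod 2) :
    (Fin n → ZMod 2) → ZMod 2 :=
  fun x => ∑ i : Fin (n - m + 1),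
    f (fun j => x ⟨i.val + j.val, by have hi := i.isLt; have hj := j.isLt; omega⟩)

/-- The ANF coefficient `a_I` of a Boolean function, via the Möbius transform:
`a_I = ⊕_{x : supp(x) ⊆ I} f(x)`. -/
def anf {n : ℕ} (f : (Fin n → ZMod 2) → ZMod 2) (I : Finset (Fin n)) : ZMod 2 :=
  ∑ x ∈ Finset.univ.filter (fun x : Fin n → ZMod 2 => ∀ i, x i = 1 → i ∈ I), f x

/-- The algebraic degree of a Boolean function: `max {|I| : a_I ≠ 0}` (0 for the zero function). -/
def algDegree {n : ℕ} (f : (Fin n → ZMod 2) → ZMod 2) : ℕ :=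
  (Finset.univ.filter fun I : Finset (Fin n) => anf f I ≠ 0).sup Finset.card

/-- The Walsh transform `W_f(a) = Σ_x (-1)^(f(x) ⊕ a·x)`. -/
def walsh {n : ℕ} (f : (Fin n → ZMod 2) → ZMod 2) (a : Fin n → ZMod 2) : ℤ :=
  ∑ x : Fin n → ZMod 2, (-1 : ℤ) ^ (f x + ∑ i, a i * x i).val

/-- The semi-bent value `λ`: `2^((n+1)/2)` for odd `n`, `2^((n+2)/2)` for even `n`. -/
def sbLambda (n : ℕ) : ℤ := if Odd n then 2 ^ ((n + 1) / 2) else 2 ^ ((n + 2) / 2)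

/-- A Boolean function is semi-bent if its Walsh transform takes only the values `0, λ, -λ`. -/
def semiBent {n : ℕ} (f : (Fin n → ZMod 2) → ZMod 2) : Prop :=
  ∀ a, walsh f a = 0 ∨ walsh f a = sbLambda n ∨ walsh f a = -sbLambda n

/-- A Boolean function is balanced if it takes the value 1 exactly `2^(n-1)` times. -/
def balanced {n : ℕ} (f : (Fin n → ZMod 2) → ZMod 2) : Prop :=
  (Finset.univ.filter fun x => f x = 1).card = 2 ^ (n - 1)

/-- `b` is a linear structure of `g` if the derivative `D_b g(x) = g(x) ⊕ g(x ⊕ b)` is constant. -/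
def isLinearStructure {n : ℕ} (g : (Fin n → ZMod 2) → ZMod 2)
    (b : Fin n → ZMod 2) : Prop :=
  (∀ x, g x + g (x + b) = 0) ∨ (∀ x, g x + g (x + b) = 1)

/-- Elementary CA rule 210: `f(x₁,x₂,x₃) = x₁ ⊕ x₃ ⊕ x₂x₃`. -/
def rule210 : (Fin 3 → ZMod 2) → ZMod 2 :=
  fun x => x 0 + x 2 + x 1 * x 2

/-!
Up to a linear form in the variables other than `x₀`, `f*` is `x₀ + (x₁x₂ + x₂x₃ + ⋯ + xₙ₋₂xₙ₋₁)`
(indices from `0`). The variable `x₀` occurs only linearly, which makes `f*` balanced and doubles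
the nonzero Walsh values of the remaining function. Adding a linear form only translates the Walsh
transform, so it remains to treat the path form `y₀y₁ + y₁y₂ + ⋯ + yₖ₋₁yₖ`. There `y₀` occurs only
in `y₀y₁`: summing over it pins `y₁` to a constant, and what is left is, up to a linear form, a
path form in two variables fewer. Hence two more variables multiply the Walsh amplitude by `2`.
-/

open scoped Matrix

/-- The sign character `u ↦ (-1) ^ u` of `ZMod 2`, whose values are the summands of the Walsh
transform. -/
def signChar : AddChar (ZMod 2) ℤ := AddChar.zmodChar 2 (ζ := -1) (by norm_num)

theorem signChar_eq_one_or_neg_one (u : ZMod 2) : signChar u = 1 ∨ signChar u = -1 := by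
  revert u
  decide

theorem signChar_eq_one_sub_two_mul_ite (u : ZMod 2) :
    signChar u = 1 - 2 * if u = 1 then 1 else 0 := by
  revert u
  decide

theorem sum_signChar_mul (c : ZMod 2) : ∑ y, signChar (y * c) = if c = 0 then 2 else 0 := by
  revert c
  decide

theorem sum_eq_sum_sum_cons {α M : Type*} [Fintype α] [AddCommMonoid M] {n : ℕ}
    (g : (Fin (n + 1) → α) → M) :
    ∑ x, g x = ∑ y : α, ∑ z : Fin n → α, g (Fin.cons y z) := by
  rw [← Fintype.sum_prod_type', ← (Fin.consEquiv fun _ => α).sum_comp]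
  rfl

theorem dotProduct_fin_cons {R : Type*} [NonUnitalNonAssocSemiring R] {n : ℕ}
    (a : Fin (n + 1) → R) (y : R) (z : Fin n → R) :
    a ⬝ᵥ (Fin.cons y z : Fin (n + 1) → R) = a 0 * y + Fin.tail a ⬝ᵥ z :=
  Matrix.dotProduct_cons a y z

section Walsh

variable {n : ℕ}

theorem walsh_eq_sum_signChar (f : (Fin n → ZMod 2) → ZMod 2) (a : Fin n → ZMod 2) :
    walsh f a = ∑ x, signChar (f x + a ⬝ᵥ x) :=
  rfl

theorem walsh_add_dotProduct (f : (Fin n → ZMod 2) → ZMod 2) (a b : Fin n → ZMod 2) :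
    walsh (fun x => f x + b ⬝ᵥ x) a = walsh f (b + a) := by
  simp only [walsh_eq_sum_signChar, add_dotProduct, add_assoc]

theorem walsh_head_add_tail (g : (Fin n → ZMod 2) → ZMod 2) (a : Fin (n + 1) → ZMod 2) :
    walsh (fun x => x 0 + g (Fin.tail x)) a
      = if a 0 = 1 then 2 * walsh g (Fin.tail a) else 0 := by
  have split_sign (y : ZMod 2) (z : Fin n → ZMod 2) :
      signChar (y + g z + (a 0 * y + Fin.tail a ⬝ᵥ z))
        = signChar (y * (1 + a 0)) * signChar (g z + Fin.tail a ⬝ᵥ z) := by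
    rw [← AddChar.map_add_eq_mul]
    congr 1
    ring
  have one_add_eq_zero_iff : 1 + a 0 = 0 ↔ a 0 = 1 := by
    rw [CharTwo.add_eq_zero, eq_comm]
  simp only [walsh_eq_sum_signChar, sum_eq_sum_sum_cons, dotProduct_fin_cons, Fin.cons_zero,
    Fin.tail_cons, split_sign, ← Finset.mul_sum, ← Finset.sum_mul, sum_signChar_mul,
    one_add_eq_zero_iff, ite_mul, zero_mul]

/-- Summing over `x 0` kills every term except those with `x 1 = a 0`. -/
theorem walsh_head_mul_add (g : ZMod 2 → (Fin n → ZMod 2) → ZMod 2) (a : Fin (n + 2) → ZMod 2) :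
    walsh (fun x => x 0 * x 1 + g (x 1) (Fin.tail (Fin.tail x))) a
      = 2 * signChar (a 0 * a 1) * walsh (g (a 0)) (Fin.tail (Fin.tail a)) := by
  have split_sign (y₀ y₁ : ZMod 2) (z : Fin n → ZMod 2) :
      signChar (y₀ * y₁ + g y₁ z + (a 0 * y₀ + (a 1 * y₁ + Fin.tail (Fin.tail a) ⬝ᵥ z)))
        = signChar (y₀ * (y₁ + a 0)) *
          (signChar (a 1 * y₁) * signChar (g y₁ z + Fin.tail (Fin.tail a) ⬝ᵥ z)) := by
    simp only [← AddChar.map_add_eq_mul]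
    congr 1
    ring
  have tail_zero : Fin.tail a 0 = a 1 := rfl
  have add_eq_zero_iff (y : ZMod 2) : y + a 0 = 0 ↔ a 0 = y := by
    rw [CharTwo.add_eq_zero, eq_comm]
  calc walsh (fun x => x 0 * x 1 + g (x 1) (Fin.tail (Fin.tail x))) a
      = ∑ y₀, ∑ y₁, signChar (y₀ * (y₁ + a 0)) *
          (signChar (a 1 * y₁) * walsh (g y₁) (Fin.tail (Fin.tail a))) := by
        simp only [walsh_eq_sum_signChar, sum_eq_sum_sum_cons, dotProduct_fin_cons, Fin.cons_zero,
          Fin.cons_one, Fin.tail_cons, tail_zero, split_sign, ← Finset.mul_sum]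
    _ = ∑ y₁, if a 0 = y₁ then
          2 * (signChar (a 1 * y₁) * walsh (g y₁) (Fin.tail (Fin.tail a))) else 0 := by
        rw [Finset.sum_comm]
        simp only [← Finset.sum_mul, sum_signChar_mul, add_eq_zero_iff, ite_mul, zero_mul]
    _ = 2 * signChar (a 0 * a 1) * walsh (g (a 0)) (Fin.tail (Fin.tail a)) := by
        rw [Finset.sum_ite_eq, if_pos (Finset.mem_univ _), mul_comm (a 1), mul_assoc]

theorem walsh_zero_eq_two_pow_sub (f : (Fin n → ZMod 2) → ZMod 2) :
    walsh f 0 = 2 ^ n - 2 * (Finset.univ.filter fun x => f x = 1).card := by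
  simp only [walsh_eq_sum_signChar, signChar_eq_one_sub_two_mul_ite, zero_dotProduct, add_zero,
    Finset.sum_sub_distrib, ← Finset.mul_sum, Finset.sum_boole]
  simp

theorem balanced_of_walsh_zero_eq_zero {f : (Fin n → ZMod 2) → ZMod 2} (hf : walsh f 0 = 0) :
    balanced f := by
  have two_mul_card : 2 * (Finset.univ.filter fun x => f x = 1).card = 2 ^ n := by
    rw [walsh_zero_eq_two_pow_sub] at hf
    exact_mod_cast (sub_eq_zero.mp hf).symm
  unfold balanced
  cases n with
  | zero => omega
  | succ n => rwa [pow_succ', Nat.mul_left_cancel_iff two_pos] at two_mul_card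

theorem balanced_head_add_tail (g : (Fin n → ZMod 2) → ZMod 2) :
    balanced fun x : Fin (n + 1) → ZMod 2 => x 0 + g (Fin.tail x) :=
  balanced_of_walsh_zero_eq_zero <| by
    rw [walsh_head_add_tail, if_neg (by simp)]

end Walsh

/-- `f` is plateaued with amplitude `μ`: its Walsh transform only takes the values `0` and `±μ`.
Semi-bent functions are the plateaued functions of amplitude `sbLambda n`. -/
def IsPlateaued {n : ℕ} (f : (Fin n → ZMod 2) → ZMod 2) (μ : ℤ) : Prop :=
  ∀ a, walsh f a = 0 ∨ walsh f a = μ ∨ walsh f a = -μ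

theorem semiBent_iff_isPlateaued {n : ℕ} {f : (Fin n → ZMod 2) → ZMod 2} :
    semiBent f ↔ IsPlateaued f (sbLambda n) :=
  Iff.rfl

namespace IsPlateaued

variable {n : ℕ} {μ : ℤ}

theorem add_dotProduct {f : (Fin n → ZMod 2) → ZMod 2} (hf : IsPlateaued f μ)
    (b : Fin n → ZMod 2) : IsPlateaued (fun x => f x + b ⬝ᵥ x) μ := by
  intro a
  rw [walsh_add_dotProduct]
  exact hf (b + a)

theorem head_add_tail {g : (Fin n → ZMod 2) → ZMod 2} (hg : IsPlateaued g μ) :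
    IsPlateaued (fun x : Fin (n + 1) → ZMod 2 => x 0 + g (Fin.tail x)) (2 * μ) := by
  intro a
  rw [walsh_head_add_tail]
  split_ifs
  · rcases hg (Fin.tail a) with h | h | h <;> simp [h]
  · exact Or.inl rfl

theorem head_mul_add {g : ZMod 2 → (Fin n → ZMod 2) → ZMod 2} (hg : ∀ y, IsPlateaued (g y) μ) :
    IsPlateaued (fun x : Fin (n + 2) → ZMod 2 => x 0 * x 1 + g (x 1) (Fin.tail (Fin.tail x)))
      (2 * μ) := by
  intro a
  rw [walsh_head_mul_add]
  rcases signChar_eq_one_or_neg_one (a 0 * a 1) with hs | hs <;>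
    rcases hg (a 0) (Fin.tail (Fin.tail a)) with h | h | h <;> simp [hs, h]

end IsPlateaued

/-- The quadratic form `x₀x₁ + x₁x₂ + ⋯ + xₖ₋₁xₖ` of the path on `k + 1` vertices. -/
def pathForm {R : Type*} [NonUnitalNonAssocSemiring R] {k : ℕ} (x : Fin (k + 1) → R) : R :=
  ∑ i : Fin k, x i.castSucc * x i.succ

theorem pathForm_succ {R : Type*} [NonUnitalNonAssocSemiring R] {k : ℕ} (x : Fin (k + 2) → R) :
    pathForm x = x 0 * x 1 + pathForm (Fin.tail x) :=
  Fin.sum_univ_succ _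

theorem isPlateaued_pathForm (k : ℕ) :
    IsPlateaued (pathForm : (Fin (k + 1) → ZMod 2) → ZMod 2) (2 ^ (k / 2 + 1)) := by
  induction k using Nat.twoStepInduction with
  | zero => unfold IsPlateaued; decide
  | one => unfold IsPlateaued; decide
  | more k ih _ =>
    have pathForm_eq : (pathForm : (Fin (k + 3) → ZMod 2) → ZMod 2) = fun x =>
        x 0 * x 1 + (pathForm (Fin.tail (Fin.tail x)) +
          Pi.single 0 (x 1) ⬝ᵥ Fin.tail (Fin.tail x)) := by
      funext x
      rw [pathForm_succ, pathForm_succ, single_dotProduct, add_comm (pathForm _)]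
      rfl
    rw [pathForm_eq, Nat.add_div_right k two_pos, pow_succ']
    exact IsPlateaued.head_mul_add (g := fun y z => pathForm z + Pi.single 0 y ⬝ᵥ z)
      fun y => ih.add_dotProduct (Pi.single 0 y)

theorem caStar_rule210_apply (m : ℕ) (h : 3 ≤ m + 3) (x : Fin (m + 3) → ZMod 2) :
    caStar 3 (m + 3) h rule210 x
      = ∑ i : Fin (m + 1), (x i.castSucc.castSucc + x i.succ.succ
          + x i.castSucc.succ * x i.succ.succ) :=
  rfl

theorem exists_caStar_rule210_eq (m : ℕ) (h : 3 ≤ m + 3) :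
    ∃ b : Fin (m + 2) → ZMod 2, caStar 3 (m + 3) h rule210
      = fun x => x 0 + (pathForm (Fin.tail x) + b ⬝ᵥ Fin.tail x) := by
  refine ⟨Fin.snoc (Fin.snoc 1 0) 0 + Fin.cons 0 1, funext fun x => ?_⟩
  have sum_left : ∑ i : Fin (m + 1), x i.castSucc.castSucc
      = x 0 + (Fin.snoc (Fin.snoc 1 0) 0 : Fin (m + 2) → ZMod 2) ⬝ᵥ Fin.tail x := by
    rw [Fin.sum_univ_succ]
    simp [dotProduct, Fin.sum_univ_castSucc, Fin.tail]
  have sum_right : ∑ i : Fin (m + 1), x i.succ.succ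
      = (Fin.cons 0 1 : Fin (m + 2) → ZMod 2) ⬝ᵥ Fin.tail x := by
    simp [dotProduct, Fin.sum_univ_succ, Fin.tail]
  have sum_mul : ∑ i : Fin (m + 1), x i.castSucc.succ * x i.succ.succ = pathForm (Fin.tail x) :=
    rfl
  rw [caStar_rule210_apply, Finset.sum_add_distrib, Finset.sum_add_distrib, sum_left, sum_right,
    sum_mul, add_dotProduct]
  ring

theorem sbLambda_eq_two_pow (n : ℕ) : sbLambda n = 2 ^ (n / 2 + 1) := by
  unfold sbLambda
  split_ifs with hn
  · rw [Nat.odd_iff] at hn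
    congr 1
    omega
  · congr 1
    omega

theorem rule210_balanced_semibent_general (n : ℕ) (h : 3 ≤ n) :
    balanced (caStar 3 n h rule210) ∧ semiBent (caStar 3 n h rule210) := by
  obtain ⟨m, rfl⟩ := Nat.exists_eq_add_of_le' h
  obtain ⟨b, caStar_eq⟩ := exists_caStar_rule210_eq m h
  rw [caStar_eq]
  refine ⟨balanced_head_add_tail fun z => pathForm z + b ⬝ᵥ z, ?_⟩
  have amplitude : sbLambda (m + 3) = 2 * 2 ^ ((m + 1) / 2 + 1) := by
    rw [sbLambda_eq_two_pow, ← pow_succ']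
    congr 1
    omega
  rw [semiBent_iff_isPlateaued, amplitude]
  exact ((isPlateaued_pathForm (m + 1)).add_dotProduct b).head_add_tail

/-- rule 210 yields balanced semi-bent functions for all `3 ≤ n ≤ 20`. -/
theorem rule210_balanced_semibent :
    ∀ n (h : 3 ≤ n), n ≤ 20 →
      balanced (caStar 3 n h rule210) ∧ semiBent (caStar 3 n h rule210) :=
  fun n h _ => rule210_balanced_semibent_general n h
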